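/- arXiv:1303.3724 — 9 statements merged into one kernel-verified Lean document; each statement's English description precedes it below -/
import Mathlib

section
/- Let m, k ∈ ℕ with k ≥ 1 and let F₁, …, F_k ∈ ℝ⟦X*⟧ be nonzero generalised power series in m variables. Then F₁, …, F_k are all normal if and only if the product F₁ · … · F_k is normal. -/
open scoped NNReal

/-- A nonzero generalised power series `F ∈ ℝ⟦X*⟧` is *normal* if
`F = X^α · U` for some exponent `α ∈ [0,∞)^m` and some unit `U` of `ℝ⟦X*⟧`. -/
def IsNormalSeries {m : ℕ} (F : HahnSeries (Fin m → ℝ≥0) ℝ) : Prop :=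
  ∃ (α : Fin m → ℝ≥0) (U : HahnSeries (Fin m → ℝ≥0) ℝ),
    IsUnit U ∧ F = HahnSeries.single α (1 : ℝ) * U

namespace NormalAux

variable {m : ℕ}

/-- In coordinate `i`, pick a support point with minimal `i`-th coordinate, lexicographically
least among these. -/
lemma exists_min (F : HahnSeries (Fin m → ℝ≥0) ℝ) (hF : F.support.Nonempty) (i : Fin m) :
    ∃ α ∈ F.support, (∀ δ ∈ F.support, α i ≤ δ i) ∧
      ∀ δ ∈ F.support, δ i = α i → toLex α ≤ toLex δ := by
  have h1 : ((fun δ : Fin m → ℝ≥0 => δ i) '' F.support).IsPWO :=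
    F.isPWO_support.image_of_monotone (fun a b h => h i)
  have hne1 := hF.image (fun δ : Fin m → ℝ≥0 => δ i)
  obtain ⟨α₀, hα₀, hα₀'⟩ := h1.isWF.min_mem hne1
  have hmin : ∀ δ ∈ F.support, α₀ i ≤ δ i := fun δ hδ => by
    have := h1.isWF.min_le hne1 (Set.mem_image_of_mem _ hδ)
    rw [← hα₀'] at this
    exact this
  have h2 : (toLex '' {δ ∈ F.support | δ i = α₀ i}).IsPWO :=
    (F.isPWO_support.mono (Set.sep_subset _ _)).image_of_monotone Pi.toLex_monotone
  have hne2 : (toLex '' {δ ∈ F.support | δ i = α₀ i}).Nonempty :=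
    ⟨_, Set.mem_image_of_mem _ ⟨hα₀, rfl⟩⟩
  obtain ⟨α, ⟨hα, hαi⟩, hα'⟩ := h2.isWF.min_mem hne2
  refine ⟨α, hα, fun δ hδ => hαi ▸ hmin δ hδ, fun δ hδ hδi => ?_⟩
  rw [hα']
  exact h2.isWF.min_le hne2 (Set.mem_image_of_mem _ ⟨hδ, hδi.trans hαi⟩)

lemma exists_mem_mul (F G : HahnSeries (Fin m → ℝ≥0) ℝ) (hF : F.support.Nonempty)
    (hG : G.support.Nonempty) (i : Fin m) :
    ∃ ε ∈ (F * G).support, ∀ α ∈ F.support, ∀ β ∈ G.support, ε i ≤ α i + β i := by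
  obtain ⟨α, hα, hαm, hαl⟩ := exists_min F hF i
  obtain ⟨β, hβ, hβm, hβl⟩ := exists_min G hG i
  refine ⟨α + β, ?_, fun a ha b hb => add_le_add (hαm a ha) (hβm b hb)⟩
  rw [HahnSeries.mem_support, HahnSeries.coeff_mul, Finset.sum_eq_single (α, β)]
  · exact mul_ne_zero hα hβ
  · rintro ⟨a, b⟩ hab hne
    exfalso
    rw [Finset.mem_addAntidiagonal] at hab
    obtain ⟨ha, hb, hs⟩ := hab
    simp only at ha hb hs
    have hi : a i + b i = α i + β i := congrFun hs i
    have h1 := hαm a ha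
    have h2 := hβm b hb
    have e1 : a i = α i := by
      refine le_antisymm ?_ h1
      by_contra! h
      exact absurd hi (add_lt_add_of_lt_of_le h h2).ne'
    have e2 : b i = β i := by
      rw [e1] at hi
      exact add_left_cancel hi
    have l1 := hαl a ha e1
    have l2 := hβl b hb e2
    have hs' : toLex a + toLex b = toLex α + toLex β := congrArg toLex hs
    have e3 : toLex α = toLex a := by
      refine le_antisymm l1 ?_
      by_contra! h
      exact absurd hs' (add_lt_add_of_lt_of_le h l2).ne'
    have e4 : α = a := toLex.injective e3
    subst e4
    have e5 : b = β := add_left_cancel hs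
    exact hne (by rw [e5])
  · intro h
    exfalso
    apply h
    rw [Finset.mem_addAntidiagonal]
    exact ⟨hα, hβ, rfl⟩

/-- division by a monomial -/
lemma exists_div (F : HahnSeries (Fin m → ℝ≥0) ℝ) (a : Fin m → ℝ≥0)
    (h : ∀ δ ∈ F.support, a ≤ δ) :
    ∃ F', F = HahnSeries.single a (1 : ℝ) * F' := by
  refine ⟨⟨fun δ => F.coeff (δ + a), ?_⟩, ?_⟩
  · have := F.isPWO_support.image_of_monotone (f := fun δ => δ - a)
      (fun x y hxy => tsub_le_tsub_right hxy a)
    refine this.mono fun δ hδ => ⟨δ + a, hδ, ?_⟩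
    exact add_tsub_cancel_right δ a
  · ext δ
    by_cases hδ : a ≤ δ
    · obtain ⟨c, rfl⟩ := exists_add_of_le hδ
      rw [add_comm a c, HahnSeries.coeff_single_mul_add]
      simp
    · have h1 : F.coeff δ = 0 := by
        by_contra h'
        exact hδ (h δ h')
      rw [h1]
      symm
      by_contra h'
      obtain ⟨x, hx, y, hy, hxy⟩ := HahnSeries.support_mul_subset (HahnSeries.mem_support _ _ |>.2 h')
      have : x = a := HahnSeries.support_single_subset hx
      subst this
      exact hδ (hxy ▸ le_self_add)

lemma single_cancel (a : Fin m → ℝ≥0) (P Q : HahnSeries (Fin m → ℝ≥0) ℝ)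
    (h : HahnSeries.single a (1 : ℝ) * P = HahnSeries.single a (1 : ℝ) * Q) : P = Q := by
  ext δ
  have := congrArg (fun S => S.coeff (δ + a)) h
  simpa [HahnSeries.coeff_single_mul_add] using this

lemma unit_coeff (U : HahnSeries (Fin m → ℝ≥0) ℝ) (hU : IsUnit U) : U.coeff 0 ≠ 0 := by
  obtain ⟨V, hV⟩ := hU.exists_right_inv
  have h : (0 : Fin m → ℝ≥0) ∈ (U * V).support := by
    rw [hV]; simp
  obtain ⟨x, hx, y, hy, hxy⟩ := HahnSeries.support_mul_subset h
  have : x = 0 := le_antisymm (hxy ▸ le_self_add) (zero_le)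
  subst this
  exact hx

lemma normal_left (F G : HahnSeries (Fin m → ℝ≥0) ℝ) (h : IsNormalSeries (F * G)) :
    IsNormalSeries F := by
  obtain ⟨γ, U, hU, hFG⟩ := h
  have hγ : γ ∈ (F * G).support := by
    have := unit_coeff U hU
    rw [HahnSeries.mem_support, hFG]
    have h2 := HahnSeries.coeff_single_mul_add (r := (1 : ℝ)) (x := U) (a := 0) (b := γ)
    rw [zero_add] at h2
    rw [h2, one_mul]
    exact this
  have hle : ∀ ε ∈ (F * G).support, γ ≤ ε := by
    intro ε hε
    rw [hFG] at hε
    obtain ⟨x, hx, y, hy, hxy⟩ := HahnSeries.support_mul_subset hε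
    have : x = γ := HahnSeries.support_single_subset hx
    subst this
    exact hxy ▸ le_self_add
  obtain ⟨a, ha, b, hb, hab⟩ := HahnSeries.support_mul_subset hγ
  have hab : a + b = γ := hab
  have key : ∀ α ∈ F.support, ∀ β ∈ G.support, a + b ≤ α + β := by
    intro α hα β hβ i
    obtain ⟨ε, hε, hε'⟩ := exists_mem_mul F G ⟨a, ha⟩ ⟨b, hb⟩ i
    rw [hab]
    exact (hle ε hε i).trans (hε' α hα β hβ)
  obtain ⟨F', hF'⟩ := exists_div F a (fun δ hδ => le_of_add_le_add_right (key δ hδ b hb))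
  obtain ⟨G', hG'⟩ := exists_div G b (fun δ hδ => le_of_add_le_add_left (key a ha δ hδ))
  refine ⟨a, F', ?_, hF'⟩
  have : F' * G' = U := by
    apply single_cancel γ
    rw [← hFG, hF', hG', mul_mul_mul_comm, HahnSeries.single_mul_single, hab, one_mul]
  exact isUnit_of_mul_isUnit_left (this ▸ hU)

lemma normal_one : IsNormalSeries (1 : HahnSeries (Fin m → ℝ≥0) ℝ) :=
  ⟨0, 1, isUnit_one, by simp⟩

lemma normal_mul (F G : HahnSeries (Fin m → ℝ≥0) ℝ) (hF : IsNormalSeries F)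
    (hG : IsNormalSeries G) : IsNormalSeries (F * G) := by
  obtain ⟨a, U, hU, rfl⟩ := hF
  obtain ⟨b, V, hV, rfl⟩ := hG
  refine ⟨a + b, U * V, hU.mul hV, ?_⟩
  rw [mul_mul_mul_comm, HahnSeries.single_mul_single, one_mul]

end NormalAux

/-- Nonzero generalised power series `F₁, …, F_k` (`k ≥ 1`) are all
normal if and only if their product `F₁ ⋯ F_k` is normal. -/
theorem all_normal_iff_prod_normal (m k : ℕ) (hk : 1 ≤ k)
    (F : Fin k → HahnSeries (Fin m → ℝ≥0) ℝ) (hF : ∀ i, F i ≠ 0) :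
    (∀ i, IsNormalSeries (F i)) ↔ IsNormalSeries (∏ i, F i) := by
  constructor
  · intro h
    exact Finset.prod_induction F IsNormalSeries NormalAux.normal_mul NormalAux.normal_one
      (fun i _ => h i)
  · intro h i
    obtain ⟨c, hc⟩ := Finset.dvd_prod_of_mem F (Finset.mem_univ i)
    rw [hc] at h
    exact NormalAux.normal_left _ _ h
end

section
/- Let m ∈ ℕ and let F₁, F₂ ∈ ℝ⟦X*⟧ be generalised power series in m variables such that F₁, F₂ and F₁ − F₂ are all normal. Then F₁ divides F₂ in ℝ⟦X*⟧ or F₂ divides F₁ in ℝ⟦X*⟧. -/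
open scoped NNReal

theorem unit_coeff_ne {m : ℕ} {U : HahnSeries (Fin m → ℝ≥0) ℝ} (h : IsUnit U) :
    U.coeff 0 ≠ 0 := by
  intro h0
  obtain ⟨V, hV⟩ := h.exists_right_inv
  have h1 : (U * V).coeff 0 = 1 := by rw [hV]; simp [HahnSeries.coeff_one]
  rw [HahnSeries.coeff_mul, Finset.sum_eq_zero] at h1
  · exact zero_ne_one h1
  · intro ij hij
    rw [Finset.mem_antidiagonal] at hij
    have h2 : ij.1 = 0 := (add_eq_zero.mp hij.2.2).1
    rw [h2, h0, zero_mul]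

theorem normal_coeff_ne {m : ℕ} (α : Fin m → ℝ≥0) {U : HahnSeries (Fin m → ℝ≥0) ℝ}
    (h : IsUnit U) : (HahnSeries.single α (1 : ℝ) * U).coeff α ≠ 0 := by
  have h1 := HahnSeries.coeff_single_mul_add (r := (1 : ℝ)) (x := U) (a := 0) (b := α)
  rw [zero_add, one_mul] at h1
  rw [h1]
  exact unit_coeff_ne h

theorem normal_coeff_le {m : ℕ} {α δ : Fin m → ℝ≥0} {U : HahnSeries (Fin m → ℝ≥0) ℝ}
    (h : (HahnSeries.single α (1 : ℝ) * U).coeff δ ≠ 0) : α ≤ δ := by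
  obtain ⟨a, ha, b, -, hab⟩ := Set.mem_add.mp (HahnSeries.support_mul_subset h)
  have h1 : a = α := HahnSeries.support_single_subset ha
  rw [← hab, h1]
  exact le_self_add

theorem normal_dvd {m : ℕ} {α β : Fin m → ℝ≥0} {U V : HahnSeries (Fin m → ℝ≥0) ℝ}
    (h : IsUnit U) (hle : α ≤ β) :
    HahnSeries.single α (1 : ℝ) * U ∣ HahnSeries.single β (1 : ℝ) * V := by
  rw [h.mul_right_dvd]
  refine Dvd.dvd.mul_right ⟨HahnSeries.single (β - α) (1 : ℝ), ?_⟩ V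
  rw [HahnSeries.single_mul_single, add_tsub_cancel_of_le hle, one_mul]

/-- If `F₁`, `F₂` and `F₁ − F₂` are all normal generalised power
series, then `F₁ ∣ F₂` or `F₂ ∣ F₁` in `ℝ⟦X*⟧`. -/
theorem normal_sub_normal_dvd (m : ℕ) (F₁ F₂ : HahnSeries (Fin m → ℝ≥0) ℝ)
    (h₁ : IsNormalSeries F₁) (h₂ : IsNormalSeries F₂)
    (h₁₂ : IsNormalSeries (F₁ - F₂)) :
    F₁ ∣ F₂ ∨ F₂ ∣ F₁ := by
  obtain ⟨α, U, hU, rfl⟩ := h₁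
  obtain ⟨β, V, hV, rfl⟩ := h₂
  obtain ⟨γ, W, hW, h⟩ := h₁₂
  by_cases hab : α ≤ β
  · exact Or.inl (normal_dvd hU hab)
  by_cases hba : β ≤ α
  · exact Or.inr (normal_dvd hV hba)
  exfalso
  have hα : γ ≤ α := by
    apply normal_coeff_le (U := W)
    rw [← h, HahnSeries.coeff_sub, not_not.mp (mt normal_coeff_le hba), sub_zero]
    exact normal_coeff_ne α hU
  have hβ : γ ≤ β := by
    apply normal_coeff_le (U := W)
    rw [← h, HahnSeries.coeff_sub, not_not.mp (mt normal_coeff_le hab), zero_sub]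
    exact neg_ne_zero.mpr (normal_coeff_ne β hV)
  have hγ := normal_coeff_ne γ hW
  rw [← h, HahnSeries.coeff_sub,
    not_not.mp (mt normal_coeff_le fun h' => hab (h'.trans hβ)),
    not_not.mp (mt normal_coeff_le fun h' => hba (h'.trans hα)), sub_zero] at hγ
  exact hγ rfl
end

section
/- Let m ∈ ℕ. The ring ℝ⟦X*⟧ of generalised power series in m variables is an integral domain: if F, G ∈ ℝ⟦X*⟧ are both nonzero, then F·G is nonzero. -/
open scoped NNReal

/-- A nonzero series has a lexicographically least exponent in its support. -/
theorem exists_lex_min (m : ℕ) (F : HahnSeries (Fin m → ℝ≥0) ℝ) (hF : F ≠ 0) :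
    ∃ a, F.coeff a ≠ 0 ∧ ∀ b, F.coeff b ≠ 0 → toLex a ≤ toLex b := by
  have hwf : (toLex '' F.support : Set (Lex (Fin m → ℝ≥0))).IsWF :=
    (F.isPWO_support.image_of_monotone Pi.toLex_monotone).isWF
  have hne : (toLex '' F.support : Set (Lex (Fin m → ℝ≥0))).Nonempty :=
    (HahnSeries.support_nonempty_iff.2 hF).image _
  obtain ⟨a, ha, hmin⟩ := hwf.min_mem hne
  refine ⟨a, ha, fun b hb => ?_⟩
  rw [hmin]
  exact hwf.min_le hne ⟨b, hb, rfl⟩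

/-- The ring `ℝ⟦X*⟧` of generalised power series in `m` variables
is an integral domain: the product of two nonzero series is nonzero. -/
theorem generalised_power_series_no_zero_divisors (m : ℕ)
    (F G : HahnSeries (Fin m → ℝ≥0) ℝ) (hF : F ≠ 0) (hG : G ≠ 0) :
    F * G ≠ 0 := by
  obtain ⟨a, ha, hamin⟩ := exists_lex_min m F hF
  obtain ⟨b, hb, hbmin⟩ := exists_lex_min m G hG
  intro h
  have hc : (F * G).coeff (a + b) = F.coeff a * G.coeff b := by
    rw [HahnSeries.coeff_mul, Finset.sum_eq_single (a, b)]
    · rintro ⟨i, j⟩ hij hne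
      rw [Finset.mem_antidiagonal] at hij
      obtain ⟨hi, hj, hs⟩ := hij
      have h1 := hamin i hi
      have h2 := hbmin j hj
      have hs' : toLex a + toLex b = toLex i + toLex j := congrArg toLex hs.symm
      obtain ⟨e1, e2⟩ := (add_eq_add_iff_eq_and_eq h1 h2).1 hs'
      exact absurd (Prod.ext (toLex.injective e1.symm) (toLex.injective e2.symm)) hne
    · intro hn
      rw [Finset.mem_antidiagonal] at hn
      exact absurd ⟨ha, hb, rfl⟩ hn
  rw [h] at hc
  exact mul_ne_zero ha hb (by simpa using hc.symm)
end

section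
/- Let m ∈ ℕ, let U ∈ ℝ⟦X*⟧ be a generalised power series in m variables with U(0) > 0, and let k ∈ ℕ with k ≥ 1. Then there exists V ∈ ℝ⟦X*⟧ with V(0) > 0 such that V^k = U. -/
open scoped NNReal

noncomputable section KthRootAux

/-- Reinterpret a series for the product order as one for the lexicographic order. -/
def toLexSeries {m : ℕ} (x : HahnSeries (Fin m → ℝ≥0) ℝ) :
    HahnSeries (Lex (Fin m → ℝ≥0)) ℝ where
  coeff g := x.coeff (ofLex g)
  isPWO_support' := by
    have h := x.isPWO_support.image_of_monotone (Pi.toLex_monotone (ι := Fin m) (β := fun _ => ℝ≥0))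
    refine h.mono ?_
    intro g hg
    exact ⟨ofLex g, hg, rfl⟩

theorem toLexSeries_coeff {m : ℕ} (x : HahnSeries (Fin m → ℝ≥0) ℝ) (g : Lex (Fin m → ℝ≥0)) :
    (toLexSeries x).coeff g = x.coeff (ofLex g) := rfl

theorem toLexSeries_injective {m : ℕ} : Function.Injective (toLexSeries (m := m)) := by
  intro x y h
  ext g
  have := congrArg (fun z => z.coeff (toLex g)) h
  simpa [toLexSeries_coeff] using this

theorem toLexSeries_one {m : ℕ} : toLexSeries (1 : HahnSeries (Fin m → ℝ≥0) ℝ) = 1 := by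
  ext g
  rw [toLexSeries_coeff, HahnSeries.coeff_one, HahnSeries.coeff_one]
  rfl

theorem toLexSeries_add {m : ℕ} (x y : HahnSeries (Fin m → ℝ≥0) ℝ) :
    toLexSeries (x + y) = toLexSeries x + toLexSeries y := by
  ext g
  simp [toLexSeries_coeff]

theorem toLexSeries_mul {m : ℕ} (x y : HahnSeries (Fin m → ℝ≥0) ℝ) :
    toLexSeries (x * y) = toLexSeries x * toLexSeries y := by
  ext g
  rw [toLexSeries_coeff, HahnSeries.coeff_mul, HahnSeries.coeff_mul]
  refine Finset.sum_bij' (fun p _ => (toLex p.1, toLex p.2)) (fun p _ => (ofLex p.1, ofLex p.2))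
    ?_ ?_ ?_ ?_ ?_
  · intro p hp
    rw [Finset.mem_antidiagonal] at hp ⊢
    obtain ⟨h1, h2, h3⟩ := hp
    refine ⟨h1, h2, ?_⟩
    change toLex (p.1 + p.2) = g
    rw [h3]; rfl
  · intro p hp
    rw [Finset.mem_antidiagonal] at hp ⊢
    obtain ⟨h1, h2, h3⟩ := hp
    refine ⟨h1, h2, ?_⟩
    change ofLex (p.1 + p.2) = _
    rw [h3]
  · intro p _; rfl
  · intro p _; rfl
  · intro p _; rfl

theorem toLexSeries_pow {m : ℕ} (x : HahnSeries (Fin m → ℝ≥0) ℝ) (n : ℕ) :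
    toLexSeries (x ^ n) = toLexSeries x ^ n := by
  induction n with
  | zero => simp [toLexSeries_one]
  | succ n ih => rw [pow_succ, pow_succ, toLexSeries_mul, ih]

theorem binomialSeries_root (k : ℕ) (hk : 1 ≤ k) :
    (PowerSeries.binomialSeries ℝ ((k : ℝ)⁻¹)) ^ k = 1 + PowerSeries.X := by
  have h : ∀ n : ℕ, (PowerSeries.binomialSeries ℝ ((k : ℝ)⁻¹)) ^ n
      = PowerSeries.binomialSeries ℝ ((n : ℝ) * (k : ℝ)⁻¹) := by
    intro n
    induction n with
    | zero => simp
    | succ n ih =>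
      rw [pow_succ, ih, ← PowerSeries.binomialSeries_add]
      congr 1
      push_cast; ring
  rw [h k, mul_inv_cancel₀ (by positivity)]
  simpa using PowerSeries.binomialSeries_nat (R := ℝ) (A := ℝ) 1

/-- The root of `1 + x` when `x` has no constant term. -/
theorem exists_root_one_add (m k : ℕ) (hk : 1 ≤ k)
    (x : HahnSeries (Fin m → ℝ≥0) ℝ) (hx : x.coeff 0 = 0) :
    ∃ V : HahnSeries (Fin m → ℝ≥0) ℝ, V.coeff 0 = 1 ∧ V ^ k = 1 + x := by
  have hpos : 0 < (toLexSeries x).orderTop := by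
    by_cases h0 : toLexSeries x = 0
    · rw [h0, HahnSeries.orderTop_zero]; exact WithTop.coe_lt_top _
    · obtain ⟨g, hg⟩ := WithTop.ne_top_iff_exists.1 (HahnSeries.orderTop_ne_top.2 h0)
      have hne := HahnSeries.coeff_orderTop_ne hg.symm
      rw [← hg]
      refine WithTop.coe_lt_coe.2 ?_
      refine lt_of_le_of_ne ?_ ?_
      · exact Pi.toLex_monotone (ι := Fin m) (β := fun _ => ℝ≥0) (zero_le (a := ofLex g))
      · rintro rfl
        exact hne hx
  set f := PowerSeries.binomialSeries ℝ ((k : ℝ)⁻¹) with hf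
  set y := PowerSeries.heval (toLexSeries x) f with hy
  have hyk : y ^ k = 1 + toLexSeries x := by
    rw [hy, ← map_pow, hf, binomialSeries_root k hk, map_add, map_one,
      PowerSeries.heval_X _ hpos]
  have hsupp : ∀ g, y.coeff g ≠ 0 → ofLex g ∈ AddSubmonoid.closure x.support := by
    intro g hg
    rw [hy, PowerSeries.coeff_heval] at hg
    have hex : ∃ n, ((HahnSeries.SummableFamily.powerSeriesFamily (toLexSeries x) f).coeff g) n
        ≠ 0 := by
      by_contra! hall
      exact hg (by simp only [hall, finsum_zero])
    obtain ⟨n, hn⟩ := hex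
    have h2 : (toLexSeries x ^ n).coeff g ≠ 0 := by
      intro h
      apply hn
      simp [hpos, h]
    rw [← toLexSeries_pow, toLexSeries_coeff] at h2
    exact HahnSeries.SummableFamily.support_pow_subset_closure x n h2
  let V : HahnSeries (Fin m → ℝ≥0) ℝ :=
    { coeff := fun g => y.coeff (toLex g)
      isPWO_support' := by
        have h := Set.IsPWO.addSubmonoid_closure (s := x.support) (fun a _ => zero_le (a := a))
          x.isPWO_support
        exact h.mono (fun g hg => hsupp (toLex g) hg) }
  have hV : toLexSeries V = y := by
    ext g; rfl
  refine ⟨V, ?_, ?_⟩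
  · change y.coeff 0 = 1
    rw [hy, PowerSeries.coeff_heval_zero, hf]
    simp
  · apply toLexSeries_injective
    rw [toLexSeries_pow, hV, hyk, toLexSeries_add, toLexSeries_one]

end KthRootAux

/-- If `U ∈ ℝ⟦X*⟧` has positive constant coefficient `U(0) > 0`
and `k ≥ 1`, then there is `V ∈ ℝ⟦X*⟧` with `V(0) > 0` and `V^k = U`. -/
theorem exists_kth_root (m k : ℕ) (hk : 1 ≤ k)
    (U : HahnSeries (Fin m → ℝ≥0) ℝ) (hU : 0 < U.coeff 0) :
    ∃ V : HahnSeries (Fin m → ℝ≥0) ℝ, 0 < V.coeff 0 ∧ V ^ k = U := by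
  obtain ⟨W, hW0, hW⟩ := exists_root_one_add m k hk ((U.coeff 0)⁻¹ • U - 1) (by
    simp [hU.ne'])
  have hr : ((U.coeff 0) ^ ((k : ℝ)⁻¹)) ^ k = U.coeff 0 :=
    Real.rpow_inv_natCast_pow hU.le (by omega)
  refine ⟨((U.coeff 0) ^ ((k : ℝ)⁻¹)) • W, ?_, ?_⟩
  · rw [HahnSeries.coeff_smul, hW0]
    simpa using Real.rpow_pos_of_pos hU _
  · rw [← HahnSeries.C_mul_eq_smul, mul_pow, ← map_pow, hr, HahnSeries.C_mul_eq_smul, hW, add_sub_cancel, smul_smul, mul_inv_cancel₀ hU.ne', one_smul]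
end

section
/- Let q ≥ 1, let β₁ < β₂ < … < β_q be pairwise distinct elements of [0,∞), let λ > 0 be a real number, let M be a real vector space, and let c₁, …, c_q ∈ M. If for every k ∈ ℕ one has Σ_{i=1}^q (λ^{β_i} · C(β_i, k)) • c_i = 0 in M, then c₁ = … = c_q = 0. -/
open scoped NNReal

/-- The generalised binomial coefficient `C(β,k) = β(β−1)⋯(β−k+1)/k!`
(with `C(β,0) = 1`). -/
noncomputable def genBinom (β : ℝ) (k : ℕ) : ℝ :=
  (∏ i ∈ Finset.range k, (β - i)) / (k.factorial : ℝ)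

/-- Let `β₁ < … < β_q` be distinct elements of `[0,∞)` (`q ≥ 1`),
`λ > 0`, `M` a real vector space and `c₁, …, c_q ∈ M`.  If
`Σ_{i=1}^q (λ^{β_i} · C(β_i,k)) • c_i = 0` for every `k ∈ ℕ`, then all `c_i = 0`. -/
theorem binomial_linear_independence (q : ℕ) (hq : 1 ≤ q)
    (β : Fin q → ℝ) (hβ0 : ∀ i, 0 ≤ β i) (hβ : StrictMono β)
    (lam : ℝ) (hlam : 0 < lam)
    (M : Type*) [AddCommGroup M] [Module ℝ M] (c : Fin q → M)
    (h : ∀ k : ℕ, ∑ i, (lam ^ (β i) * genBinom (β i) k) • c i = 0) :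
    ∀ i, c i = 0 := by
  classical
  let p : Fin q → Polynomial ℝ := fun k =>
    ∏ l ∈ Finset.range (k : ℕ), (Polynomial.X - Polynomial.C (l : ℝ))
  let A : Matrix (Fin q) (Fin q) ℝ := Matrix.of (fun i j => (p j).eval (β i))
  have hmon : ∀ k, (p k).Monic := fun k =>
    Polynomial.monic_prod_of_monic _ _ fun l _ => Polynomial.monic_X_sub_C _
  have hdeg : ∀ k, (p k).natDegree = k := by
    intro k
    simp only [p]
    rw [Polynomial.natDegree_prod_of_monic _ _ fun l _ => Polynomial.monic_X_sub_C _]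
    simp only [Polynomial.natDegree_X_sub_C, Finset.sum_const, Finset.card_range, smul_eq_mul,
      mul_one]
  have hdet : A.det ≠ 0 := by
    have h1 := Matrix.det_eval_matrixOfPolynomials_eq_det_vandermonde β p hdeg hmon
    have h2 := Matrix.det_vandermonde_ne_zero_iff.mpr hβ.injective
    rw [h1] at h2
    exact h2
  have hA : A * A⁻¹ = 1 := Matrix.mul_nonsing_inv A (isUnit_iff_ne_zero.mpr hdet)
  have hsum : ∀ j, ∑ i, A i j • (lam ^ (β i) • c i) = 0 := by
    intro j
    have hf : ((j : ℕ).factorial : ℝ) ≠ 0 := by exact_mod_cast Nat.factorial_ne_zero _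
    have h1 := congrArg (fun x => ((j : ℕ).factorial : ℝ) • x) (h j)
    simp only [smul_zero, Finset.smul_sum, smul_smul] at h1
    rw [← h1]
    refine Finset.sum_congr rfl fun i _ => ?_
    rw [smul_smul]
    congr 1
    simp only [A, p, Matrix.of_apply, Polynomial.eval_prod, Polynomial.eval_sub,
      Polynomial.eval_X, Polynomial.eval_C, genBinom]
    field_simp
  intro m
  have hm : lam ^ (β m) • c m = 0 := by
    calc lam ^ (β m) • c m
        = ∑ i, (A * A⁻¹) i m • (lam ^ (β i) • c i) := by
          rw [hA]
          simp [Matrix.one_apply, ite_smul]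
      _ = ∑ j, A⁻¹ j m • ∑ i, A i j • (lam ^ (β i) • c i) := by
          simp only [Matrix.mul_apply, Finset.sum_smul, Finset.smul_sum]
          rw [Finset.sum_comm]
          refine Finset.sum_congr rfl fun j _ => Finset.sum_congr rfl fun i _ => ?_
          rw [smul_smul (A⁻¹ j m), mul_comm]
      _ = 0 := by simp [hsum]
  exact (smul_eq_zero.mp hm).resolve_left (Real.rpow_pos_of_pos hlam _).ne'
end

section
/- Let q ≥ 1 and let β₁, …, β_q be pairwise distinct elements of [0,∞). Then there exist natural numbers j₁ < j₂ < … < j_q such that the q × q real matrix with entries C(β_i, j_s), 1 ≤ i, s ≤ q, has nonzero determinant. -/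
/-- Given pairwise distinct `β₁, …, β_q ∈ [0,∞)` (`q ≥ 1`), there
exist natural numbers `j₁ < … < j_q` such that the `q × q` matrix with entries
`C(β_i, j_s)` has nonzero determinant. -/
theorem exists_nonzero_binomial_determinant (q : ℕ) (hq : 1 ≤ q)
    (β : Fin q → ℝ) (hβ0 : ∀ i, 0 ≤ β i) (hβ : Function.Injective β) :
    ∃ j : Fin q → ℕ, StrictMono j ∧
      (Matrix.of fun i s : Fin q => genBinom (β i) (j s)).det ≠ 0 := by
  refine ⟨fun s => s, fun a b h => h, ?_⟩
  have hV : (Matrix.of fun i s : Fin q => (descPochhammer ℝ (s : ℕ)).eval (β i)).det ≠ 0 := by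
    rw [← Matrix.det_eval_matrixOfPolynomials_eq_det_vandermonde β
      (fun s : Fin q => descPochhammer ℝ (s : ℕ))
      (fun s => descPochhammer_natDegree _ _) (fun s => monic_descPochhammer ℝ _)]
    exact Matrix.det_vandermonde_ne_zero_iff.mpr hβ
  have hM : (Matrix.of fun i s : Fin q => genBinom (β i) (s : ℕ)) =
      Matrix.of fun i s : Fin q => (fun s : Fin q => (((s : ℕ).factorial : ℝ))⁻¹) s *
        (Matrix.of fun i s : Fin q => (descPochhammer ℝ (s : ℕ)).eval (β i)) i s := by
    ext i s
    simp [genBinom, descPochhammer_eval_eq_prod_range, div_eq_inv_mul]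
  rw [hM, Matrix.det_mul_row]
  refine mul_ne_zero (Finset.prod_ne_zero_iff.mpr fun s _ => ?_) hV
  exact inv_ne_zero (by exact_mod_cast Nat.factorial_ne_zero _)
end

section
/- Let m, n ∈ ℕ with n ≥ 1, write V = Y_n, and let F, G ∈ ℝ⟦Z*, Y⟧ be mixed generalised power series such that G is regular of order d ∈ ℕ in the variable V, i.e. the coefficient of G at the exponent (0, 0, k) vanishes for every k < d and is nonzero for k = d. Then there exist Q ∈ ℝ⟦Z*, Y⟧ and B₀, …, B_{d−1} ∈ ℝ⟦Z*, Y⟧ whose supports have last (V-)coordinate equal to 0, such that F = G·Q + Σ_{i=0}^{d−1} B_i · V^i, and moreover Supp_Z(Q) and each Supp_Z(B_i) are contained in the additive submonoid of [0,∞)^m generated by Supp_Z(F) ∪ Supp_Z(G) (the set of all finite componentwise sums of elements of Supp_Z(F) ∪ Supp_Z(G), together with 0). -/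
open scoped NNReal

/-- The ring `ℝ⟦Z*, Y⟧` of mixed generalised power series in
`Z = (Z₁,…,Z_m)` (exponents in `[0,∞)`) and `Y = (Y₁,…,Y_{n+1})`
(exponents in `ℕ`). -/
abbrev MixedSeries (m n : ℕ) :=
  HahnSeries ((Fin m → ℝ≥0) × (Fin (n + 1) → ℕ)) ℝ

/-- The exponent `(0, 0, k)`: `Z`-exponent `0`, `Y₁,…,Y_n`-exponent `0`
and `Y_{n+1} = V`-exponent `k`. -/
def vExp (m n : ℕ) (k : ℕ) : (Fin m → ℝ≥0) × (Fin (n + 1) → ℕ) :=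
  (0, Pi.single (Fin.last n) k)

/-- The `Z`-support of a mixed series: the projection of its support to the
`Z`-exponents. -/
def suppZ {m n : ℕ} (H : MixedSeries m n) : Set (Fin m → ℝ≥0) :=
  Prod.fst '' H.support

theorem wd_order {m n : ℕ} (G : MixedSeries m n) (d : ℕ)
    (hreg₀ : ∀ k < d, G.coeff (vExp m n k) = 0)
    (a b q : (Fin m → ℝ≥0) × (Fin (n + 1) → ℕ)) (ha : a ∈ G.support)
    (hab : a + b = q + vExp m n d) (hne : b ≠ q) :
    (b.1 ≤ q.1 ∧ (fun i : Fin n => b.2 i.castSucc) ≤ (fun i : Fin n => q.2 i.castSucc)) ∧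
    ((b.1 = q.1 ∧ (fun i : Fin n => b.2 i.castSucc) = (fun i : Fin n => q.2 i.castSucc)) →
      b.2 (Fin.last n) < q.2 (Fin.last n)) := by
  have h1 : a.1 + b.1 = q.1 := by
    have := congrArg Prod.fst hab
    simpa [vExp] using this
  have h2 : ∀ i : Fin n, a.2 i.castSucc + b.2 i.castSucc = q.2 i.castSucc := by
    intro i
    have := congrFun (congrArg Prod.snd hab) i.castSucc
    simpa [vExp, Pi.single_apply, Fin.castSucc_ne_last] using this
  have h3 : a.2 (Fin.last n) + b.2 (Fin.last n) = q.2 (Fin.last n) + d := by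
    have := congrFun (congrArg Prod.snd hab) (Fin.last n)
    simpa [vExp] using this
  refine ⟨⟨?_, ?_⟩, ?_⟩
  · rw [← h1]; exact le_add_of_nonneg_left (zero_le)
  · intro i
    have := h2 i
    simp only
    omega
  · rintro ⟨e1, e2⟩
    have a1 : a.1 = 0 := by
      rw [e1] at h1
      simpa using h1
    have a2 : ∀ i : Fin n, a.2 i.castSucc = 0 := by
      intro i
      have := h2 i
      have := congrFun e2 i
      omega
    have av : a = vExp m n (a.2 (Fin.last n)) := by
      refine Prod.ext a1 (funext fun i => ?_)
      refine Fin.lastCases ?_ (fun i => ?_) i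
      · simp [vExp]
      · simp [vExp, a2 i, Pi.single_apply, Fin.castSucc_ne_last]
    have hk : d ≤ a.2 (Fin.last n) := by
      by_contra hlt
      have := hreg₀ _ (not_le.1 hlt)
      rw [← av] at this
      exact ha this
    have hne' : b.2 (Fin.last n) ≠ q.2 (Fin.last n) := by
      intro e
      apply hne
      refine Prod.ext e1 (funext fun i => ?_)
      refine Fin.lastCases e (fun i => ?_) i
      exact congrFun e2 i
    omega

theorem wd_exists_coeff {m n : ℕ} (F G : MixedSeries m n) (d : ℕ)
    (hreg₀ : ∀ k < d, G.coeff (vExp m n k) = 0)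
    (hreg₁ : G.coeff (vExp m n d) ≠ 0)
    (S : AddSubmonoid (Fin m → ℝ≥0)) (hS : (S : Set (Fin m → ℝ≥0)).IsPWO)
    (hF : suppZ F ⊆ S) (hG : suppZ G ⊆ S) :
    ∃ Q : MixedSeries m n, suppZ Q ⊆ S ∧
      ∀ q, (G * Q).coeff (q + vExp m n d) = F.coeff (q + vExp m n d) := by
  classical
  let T : Set ((Fin m → ℝ≥0) × (Fin (n + 1) → ℕ)) := (S : Set (Fin m → ℝ≥0)) ×ˢ Set.univ
  have hT : T.IsPWO := hS.prod (Set.isPWO_of_wellQuasiOrderedLE _)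
  have : WellFoundedLT S := ⟨hS.isWF⟩
  let φ : T → (S × (Fin n → ℕ)) ×ₗ ℕ := fun p =>
    toLex ((⟨p.1.1, p.2.1⟩, fun i => p.1.2 i.castSucc), p.1.2 (Fin.last n))
  have wf : WellFounded (InvImage (· < ·) φ) := InvImage.wf φ wellFounded_lt
  have hφ : ∀ (a : _) (b q : T), a ∈ G.support → a + b.1 = q.1 + vExp m n d → b ≠ q →
      φ b < φ q := by
    intro a b q ha hab hne
    obtain ⟨⟨h1, h2⟩, h3⟩ := wd_order G d hreg₀ a b q ha hab (fun h => hne (Subtype.ext h))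
    rw [Prod.Lex.lt_iff]
    by_cases e : b.1.1 = q.1.1 ∧
      (fun i : Fin n => b.1.2 i.castSucc) = (fun i : Fin n => q.1.2 i.castSucc)
    · right
      exact ⟨Prod.ext (Subtype.ext e.1) e.2, h3 e⟩
    · left
      refine lt_of_le_of_ne ⟨h1, h2⟩ ?_
      intro h
      apply e
      exact ⟨congrArg (fun x => x.1.1) h, congrArg (fun x => x.2) h⟩
  let step : (q : T) → ((b : T) → InvImage (· < ·) φ b q → ℝ) → ℝ := fun q rec =>
    (F.coeff (q.1 + vExp m n d) -
      ∑ x ∈ Finset.antidiagonal G.isPWO_support hT (q.1 + vExp m n d),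
        if h : ∃ hb : x.2 ∈ T, φ ⟨x.2, hb⟩ < φ q then G.coeff x.1 * rec ⟨x.2, h.1⟩ h.2 else 0) /
      G.coeff (vExp m n d)
  let Q0 : T → ℝ := wf.fix step
  have hQ0 : ∀ q, Q0 q = step q (fun b _ => Q0 b) := fun q => wf.fix_eq step q
  let Q : MixedSeries m n :=
    { coeff := fun p => if h : p ∈ T then Q0 ⟨p, h⟩ else 0
      isPWO_support' := hT.mono (by
        intro p hp
        by_contra h
        simp [h] at hp) }
  have hQT : Q.support ⊆ T := by
    intro p hp
    by_contra h
    simp [Q, h] at hp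
  refine ⟨Q, ?_, ?_⟩
  · rintro _ ⟨p, hp, rfl⟩
    exact (hQT hp).1
  intro q
  by_cases hq : q ∈ T
  · have hmem : (vExp m n d, q) ∈
        Finset.antidiagonal G.isPWO_support hT (q + vExp m n d) := by
      rw [Finset.mem_antidiagonal]
      exact ⟨hreg₁, hq, add_comm _ _⟩
    rw [HahnSeries.coeff_mul_right' hT hQT, ← Finset.add_sum_erase _ _ hmem]
    have hQq : Q.coeff q = Q0 ⟨q, hq⟩ := dif_pos hq
    have hsum : ∑ x ∈ Finset.antidiagonal G.isPWO_support hT (q + vExp m n d),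
        (if h : ∃ hb : x.2 ∈ T, φ ⟨x.2, hb⟩ < φ ⟨q, hq⟩ then
          G.coeff x.1 * Q0 ⟨x.2, h.1⟩ else 0) =
        ∑ x ∈ (Finset.antidiagonal G.isPWO_support hT (q + vExp m n d)).erase
          (vExp m n d, q), G.coeff x.1 * Q.coeff x.2 := by
      rw [← Finset.add_sum_erase _ _ hmem, dif_neg (by rintro ⟨_, h⟩; exact lt_irrefl _ h),
        zero_add]
      refine Finset.sum_congr rfl fun x hx => ?_
      rw [Finset.mem_erase, Finset.mem_antidiagonal] at hx
      obtain ⟨hxne, hx1, hx2, hx3⟩ := hx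
      have hlt : φ ⟨x.2, hx2⟩ < φ ⟨q, hq⟩ := by
        refine hφ x.1 _ _ hx1 hx3 ?_
        intro h
        have h' : x.2 = q := congrArg Subtype.val h
        apply hxne
        refine Prod.ext ?_ h'
        rw [h', add_comm q] at hx3
        exact add_right_cancel hx3
      rw [dif_pos ⟨hx2, hlt⟩]
      congr 1
      have hQx : Q.coeff x.2 = Q0 ⟨x.2, hx2⟩ := dif_pos hx2
      exact hQx.symm
    rw [← hsum]
    simp only
    rw [hQq, hQ0]
    simp only [step]
    rw [mul_div_cancel₀ _ hreg₁]
    ring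
  · have hz : ∀ H : MixedSeries m n, H.support ⊆ T → H.coeff (q + vExp m n d) = 0 := by
      intro H hH
      by_contra h
      apply hq
      have := (hH h).1
      refine ⟨?_, trivial⟩
      simpa [vExp] using this
    rw [hz F (fun p hp => ⟨hF ⟨p, hp, rfl⟩, trivial⟩), hz (G * Q)]
    intro p hp
    obtain ⟨a, ha, b, hb, rfl⟩ := HahnSeries.support_mul_subset hp
    exact ⟨S.add_mem (hG ⟨a, ha, rfl⟩) (hQT hb).1, trivial⟩

theorem vExp_sub {m n : ℕ} (p : (Fin m → ℝ≥0) × (Fin (n + 1) → ℕ)) (k : ℕ)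
    (h : k ≤ p.2 (Fin.last n)) : ∃ q, p = q + vExp m n k := by
  refine ⟨(p.1, p.2 - Pi.single (Fin.last n) k), Prod.ext (by simp [vExp]) ?_⟩
  funext i
  refine Fin.lastCases ?_ (fun i => ?_) i
  · simp [vExp]
    omega
  · simp [vExp, Pi.single_apply, Fin.castSucc_ne_last]

/-- formal Weierstrass division: if `G ∈ ℝ⟦Z*, Y⟧` is regular of
order `d` in the last variable `V = Y_{n+1}`, then every `F ∈ ℝ⟦Z*, Y⟧` can be
written as `F = G·Q + Σ_{i<d} B_i·V^i` with the `B_i` not involving `V`, and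
with `Supp_Z(Q)` and the `Supp_Z(B_i)` contained in the additive submonoid of
`[0,∞)^m` generated by `Supp_Z(F) ∪ Supp_Z(G)`. -/
theorem formal_weierstrass_division (m n : ℕ) (F G : MixedSeries m n) (d : ℕ)
    (hreg₀ : ∀ k < d, G.coeff (vExp m n k) = 0)
    (hreg₁ : G.coeff (vExp m n d) ≠ 0) :
    ∃ (Q : MixedSeries m n) (B : Fin d → MixedSeries m n),
      (∀ i, ∀ p ∈ (B i).support, p.2 (Fin.last n) = 0) ∧
      F = G * Q + ∑ i : Fin d, B i * HahnSeries.single (vExp m n (i : ℕ)) (1 : ℝ) ∧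
      suppZ Q ⊆ ↑(AddSubmonoid.closure (suppZ F ∪ suppZ G)) ∧
      ∀ i, suppZ (B i) ⊆ ↑(AddSubmonoid.closure (suppZ F ∪ suppZ G)) := by
  classical
  set S := AddSubmonoid.closure (suppZ F ∪ suppZ G) with hSdef
  have hS : (S : Set (Fin m → ℝ≥0)).IsPWO := by
    refine Set.IsPWO.addSubmonoid_closure (fun x _ => zero_le) (Set.IsPWO.union ?_ ?_)
    · exact F.isPWO_support.image_of_monotone monotone_fst
    · exact G.isPWO_support.image_of_monotone monotone_fst
  have hF : suppZ F ⊆ S := Set.subset_union_left.trans AddSubmonoid.subset_closure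
  have hG : suppZ G ⊆ S := Set.subset_union_right.trans AddSubmonoid.subset_closure
  obtain ⟨Q, hQ, hdiv⟩ := wd_exists_coeff F G d hreg₀ hreg₁ S hS hF hG
  let T : Set ((Fin m → ℝ≥0) × (Fin (n + 1) → ℕ)) := (S : Set (Fin m → ℝ≥0)) ×ˢ Set.univ
  have hT : T.IsPWO := hS.prod (Set.isPWO_of_wellQuasiOrderedLE _)
  obtain ⟨R, hR⟩ : ∃ R, R = F - G * Q := ⟨_, rfl⟩
  have hRT : ∀ p, R.coeff p ≠ 0 → p.1 ∈ S := by
    intro p hp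
    by_cases hFp : F.coeff p = 0
    · have hp' : p ∈ (G * Q).support := by
        intro h
        apply hp
        simp [hR, hFp, h]
      obtain ⟨a, ha, b, hb, rfl⟩ := HahnSeries.support_mul_subset hp'
      exact S.add_mem (hG ⟨a, ha, rfl⟩) (hQ ⟨b, hb, rfl⟩)
    · exact hF ⟨p, hFp, rfl⟩
  have hRd : ∀ p, d ≤ p.2 (Fin.last n) → R.coeff p = 0 := by
    intro p hp
    obtain ⟨q, rfl⟩ := vExp_sub p d hp
    simp [hR, hdiv q]
  have hBT : ∀ (i : ℕ) p, (if p.2 (Fin.last n) = 0 then R.coeff (p + vExp m n i) else 0) ≠ 0 →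
      p.2 (Fin.last n) = 0 ∧ p.1 ∈ S := by
    intro i p hp
    split_ifs at hp with h0
    · refine ⟨h0, ?_⟩
      simpa [vExp] using hRT _ hp
    · exact absurd rfl hp
  let B : Fin d → MixedSeries m n := fun i =>
    { coeff := fun p => if p.2 (Fin.last n) = 0 then R.coeff (p + vExp m n i) else 0
      isPWO_support' := hT.mono fun p hp => ⟨(hBT i p hp).2, trivial⟩ }
  refine ⟨Q, B, fun i p hp => (hBT i p hp).1, ?_, hQ, ?_⟩
  · have key : ∀ (i : Fin d) p, (B i * HahnSeries.single (vExp m n (i : ℕ)) (1 : ℝ)).coeff p =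
        if p.2 (Fin.last n) = i then R.coeff p else 0 := by
      intro i p
      by_cases hi : (i : ℕ) ≤ p.2 (Fin.last n)
      · obtain ⟨q, rfl⟩ := vExp_sub p i hi
        rw [HahnSeries.coeff_mul_single_add, mul_one]
        simp [B, vExp]
      · rw [if_neg (by omega)]
        by_contra h
        obtain ⟨a, ha, b, hb, rfl⟩ := HahnSeries.support_mul_subset
          ((HahnSeries.mem_support _ _).2 h)
        have hb' := HahnSeries.support_single_subset hb
        rw [Set.mem_singleton_iff] at hb'
        subst hb'
        apply hi
        simp [vExp]
    have hsum : ∑ i : Fin d, B i * HahnSeries.single (vExp m n (i : ℕ)) (1 : ℝ) = R := by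
      ext p
      rw [HahnSeries.coeff_sum]
      simp only [key]
      by_cases hp : p.2 (Fin.last n) < d
      · rw [Finset.sum_eq_single ⟨_, hp⟩]
        · simp
        · intro i _ hi
          rw [if_neg]
          intro h
          exact hi (Fin.ext h.symm)
        · simp
      · rw [hRd p (not_lt.1 hp)]
        simp
    rw [hsum, hR]
    ring
  · rintro i _ ⟨p, hp, rfl⟩
    exact (hBT i p hp).2
end

section
/- Let A be a commutative ring and let R be the ring of generalised power series in two variables u, v with coefficients in A, i.e. the Hahn series ring over the additive monoid [0,∞) × [0,∞) (with the componentwise order) with coefficients in A. For every F ∈ R, the coefficient function g : [0,∞)² → A defined by g(γ, δ) = (coefficient of F at (γ − δ, δ)) when δ ≤ γ and g(γ, δ) = 0 otherwise, has partially well-ordered support, hence defines an element T(F) ∈ R; equivalently, T is induced by the exponent reindexing (α, β) ↦ (α + β, β), so that T(u^α v^β) = u^{α+β} v^β. The resulting map T : R → R is an injective ring homomorphism. (T represents the substitution F(u, v) ↦ F(u, u·v) given by the blow-up chart π⁰ with λ = 0.) -/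
open scoped NNReal

/-- The coefficient function of the substitution `F(u,v) ↦ F(u, u·v)`
(blow-up chart `π⁰`, `λ = 0`): `g(γ,δ)` is the coefficient of `F` at
`(γ − δ, δ)` when `δ ≤ γ`, and `0` otherwise. -/
noncomputable def blowupZeroCoeff {A : Type*} [CommRing A]
    (F : HahnSeries (ℝ≥0 × ℝ≥0) A) (q : ℝ≥0 × ℝ≥0) : A :=
  if q.2 ≤ q.1 then F.coeff (q.1 - q.2, q.2) else 0



/-- Exponent reindexing `(α, β) ↦ (α + β, β)`. -/
noncomputable def blowupShift (p : ℝ≥0 × ℝ≥0) : ℝ≥0 × ℝ≥0 := (p.1 + p.2, p.2)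

lemma blowupShift_inj : Function.Injective blowupShift := by
  rintro ⟨a, b⟩ ⟨c, d⟩ h
  simp only [blowupShift, Prod.mk.injEq] at h
  obtain ⟨h1, rfl⟩ := h
  rw [add_right_cancel h1]

lemma blowupShift_add (p q : ℝ≥0 × ℝ≥0) :
    blowupShift (p + q) = blowupShift p + blowupShift q := by
  simp only [blowupShift, Prod.fst_add, Prod.snd_add, Prod.mk_add_mk, Prod.mk.injEq, and_true]
  abel

lemma blowupShift_mono : Monotone blowupShift := by
  rintro p q ⟨h1, h2⟩
  exact ⟨add_le_add h1 h2, h2⟩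

lemma blowupZeroCoeff_shift {A : Type*} [CommRing A]
    (F : HahnSeries (ℝ≥0 × ℝ≥0) A) (p : ℝ≥0 × ℝ≥0) :
    blowupZeroCoeff F (blowupShift p) = F.coeff p := by
  simp [blowupZeroCoeff, blowupShift]

lemma blowupZeroCoeff_of_notMem {A : Type*} [CommRing A]
    (F : HahnSeries (ℝ≥0 × ℝ≥0) A) (q : ℝ≥0 × ℝ≥0) (hq : q ∉ Set.range blowupShift) :
    blowupZeroCoeff F q = 0 := by
  unfold blowupZeroCoeff
  rw [if_neg]
  intro h
  exact hq ⟨(q.1 - q.2, q.2), by simp [blowupShift, tsub_add_cancel_of_le h]⟩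

lemma blowupZeroCoeff_support {A : Type*} [CommRing A]
    (F : HahnSeries (ℝ≥0 × ℝ≥0) A) :
    Function.support (blowupZeroCoeff F) = blowupShift '' F.support := by
  ext q
  constructor
  · intro hq
    by_cases h : q ∈ Set.range blowupShift
    · obtain ⟨p, rfl⟩ := h
      rw [Function.mem_support, blowupZeroCoeff_shift] at hq
      exact ⟨p, hq, rfl⟩
    · exact absurd (blowupZeroCoeff_of_notMem F q h) hq
  · rintro ⟨p, hp, rfl⟩
    rw [Function.mem_support, blowupZeroCoeff_shift]
    exact hp

lemma blowupZeroCoeff_isPWO {A : Type*} [CommRing A]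
    (F : HahnSeries (ℝ≥0 × ℝ≥0) A) : (Function.support (blowupZeroCoeff F)).IsPWO := by
  rw [blowupZeroCoeff_support]
  exact F.isPWO_support.image_of_monotone blowupShift_mono

/-- The substitution as a map of Hahn series. -/
noncomputable def blowupMap {A : Type*} [CommRing A]
    (F : HahnSeries (ℝ≥0 × ℝ≥0) A) : HahnSeries (ℝ≥0 × ℝ≥0) A :=
  ⟨blowupZeroCoeff F, blowupZeroCoeff_isPWO F⟩

lemma blowupMap_support {A : Type*} [CommRing A]
    (F : HahnSeries (ℝ≥0 × ℝ≥0) A) : (blowupMap F).support = blowupShift '' F.support :=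
  blowupZeroCoeff_support F

lemma blowupMap_coeff_shift {A : Type*} [CommRing A]
    (F : HahnSeries (ℝ≥0 × ℝ≥0) A) (p : ℝ≥0 × ℝ≥0) :
    (blowupMap F).coeff (blowupShift p) = F.coeff p := blowupZeroCoeff_shift F p

lemma blowupMap_coeff_of_notMem {A : Type*} [CommRing A]
    (F : HahnSeries (ℝ≥0 × ℝ≥0) A) (q : ℝ≥0 × ℝ≥0) (hq : q ∉ Set.range blowupShift) :
    (blowupMap F).coeff q = 0 := blowupZeroCoeff_of_notMem F q hq

lemma blowupMap_mul {A : Type*} [CommRing A] (F G : HahnSeries (ℝ≥0 × ℝ≥0) A) :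
    blowupMap (F * G) = blowupMap F * blowupMap G := by
  ext q
  by_cases hq : q ∈ Set.range blowupShift
  · obtain ⟨p, rfl⟩ := hq
    rw [blowupMap_coeff_shift, HahnSeries.coeff_mul, HahnSeries.coeff_mul]
    refine Finset.sum_nbij (Prod.map blowupShift blowupShift) ?_ ?_ ?_ ?_
    · rintro ⟨a, b⟩ h
      rw [Finset.mem_addAntidiagonal] at h ⊢
      obtain ⟨h1, h2, h3⟩ := h
      rw [blowupMap_support, blowupMap_support]
      refine ⟨⟨a, h1, rfl⟩, ⟨b, h2, rfl⟩, ?_⟩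
      rw [← h3, blowupShift_add]
      rfl
    · exact (blowupShift_inj.prodMap blowupShift_inj).injOn
    · rintro ⟨a, b⟩ h
      rw [Finset.mem_coe, Finset.mem_addAntidiagonal, blowupMap_support, blowupMap_support] at h
      obtain ⟨⟨a, ha, rfl⟩, ⟨b, hb, rfl⟩, h3⟩ := h
      refine ⟨(a, b), ?_, rfl⟩
      rw [Finset.mem_coe, Finset.mem_addAntidiagonal]
      exact ⟨ha, hb, blowupShift_inj (by rw [blowupShift_add]; exact h3)⟩
    · rintro ⟨a, b⟩ _
      simp only [Prod.map_apply, blowupMap_coeff_shift]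
  · rw [blowupMap_coeff_of_notMem _ _ hq, HahnSeries.coeff_mul]
    symm
    apply Finset.sum_eq_zero
    rintro ⟨a, b⟩ h
    rw [Finset.mem_addAntidiagonal, blowupMap_support, blowupMap_support] at h
    obtain ⟨⟨a, ha, rfl⟩, ⟨b, hb, rfl⟩, h3⟩ := h
    exact absurd ⟨a + b, by rw [blowupShift_add]; exact h3⟩ hq

lemma blowupMap_add {A : Type*} [CommRing A] (F G : HahnSeries (ℝ≥0 × ℝ≥0) A) :
    blowupMap (F + G) = blowupMap F + blowupMap G := by
  ext q
  by_cases hq : q ∈ Set.range blowupShift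
  · obtain ⟨p, rfl⟩ := hq
    simp [blowupMap_coeff_shift]
  · simp [blowupMap_coeff_of_notMem _ _ hq]

lemma blowupMap_one {A : Type*} [CommRing A] :
    blowupMap (1 : HahnSeries (ℝ≥0 × ℝ≥0) A) = 1 := by
  have h0 : blowupShift 0 = 0 := by simp [blowupShift]
  ext q
  by_cases hq : q ∈ Set.range blowupShift
  · obtain ⟨p, rfl⟩ := hq
    rw [blowupMap_coeff_shift, HahnSeries.coeff_one, HahnSeries.coeff_one]
    have : blowupShift p = 0 ↔ p = 0 := by
      rw [← blowupShift_inj.eq_iff (a := p), h0]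
    by_cases hp : p = 0
    · rw [if_pos hp, if_pos (this.2 hp)]
    · rw [if_neg hp, if_neg (fun h => hp (this.1 h))]
  · rw [blowupMap_coeff_of_notMem _ _ hq, HahnSeries.coeff_one, if_neg]
    rintro rfl
    exact hq ⟨0, h0⟩

lemma blowupMap_zero {A : Type*} [CommRing A] :
    blowupMap (0 : HahnSeries (ℝ≥0 × ℝ≥0) A) = 0 := by
  ext q
  simp [blowupMap, blowupZeroCoeff]

/-- For every `F` in the ring `R` of generalised power series in
two variables `u, v` over a commutative ring `A`, the coefficient function
`(γ,δ) ↦ coeff F (γ−δ, δ)` (for `δ ≤ γ`, and `0` otherwise) has partially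
well-ordered support, hence defines an element `T(F) ∈ R`; the resulting map
`T : R → R` (representing `F(u,v) ↦ F(u, u·v)`) is an injective ring
homomorphism. -/
theorem blowup_zero_injective_ringHom (A : Type*) [CommRing A] :
    (∀ F : HahnSeries (ℝ≥0 × ℝ≥0) A,
        (Function.support (blowupZeroCoeff F)).IsPWO) ∧
    ∃ T : HahnSeries (ℝ≥0 × ℝ≥0) A →+* HahnSeries (ℝ≥0 × ℝ≥0) A,
      Function.Injective T ∧
      ∀ (F : HahnSeries (ℝ≥0 × ℝ≥0) A) (q : ℝ≥0 × ℝ≥0),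
        (T F).coeff q = blowupZeroCoeff F q := by
  refine ⟨blowupZeroCoeff_isPWO, ⟨⟨⟨blowupMap, blowupMap_one⟩, blowupMap_mul⟩,
    blowupMap_zero, blowupMap_add⟩, ?_, fun F q => rfl⟩
  intro F G h
  ext p
  rw [← blowupMap_coeff_shift F, ← blowupMap_coeff_shift G]
  exact congrArg (fun H => HahnSeries.coeff H (blowupShift p)) h
end

section
/- Fix a real number λ > 0 and a commutative ℝ-algebra A, and let R be the ring of generalised power series in two variables u, v with coefficients in A, i.e. the Hahn series ring over the additive monoid [0,∞) × [0,∞) (componentwise order) with coefficients in A. For every F ∈ R the following hold: (i) for each γ ∈ [0,∞) the set D_γ = {(α, β) ∈ Supp(F) : α + β = γ} is finite; (ii) the function g : [0,∞)² → A defined by g(γ, k) = Σ_{(α,β) ∈ D_γ} (λ^{β−k} · C(β, k)) • F.coeff(α, β) for k ∈ ℕ, and g(γ, t) = 0 for t ∉ ℕ, has partially well-ordered support, hence defines an element T_λ(F) ∈ R; (iii) the resulting map T_λ : R → R is an injective ring homomorphism. (T_λ represents the substitution F(u, v) ↦ F(u, u·(λ + v)) given by the blow-up chart π^λ.) -/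
open scoped NNReal Classical

/-- The coefficient function of the substitution `F(u,v) ↦ F(u, u·(λ + v))`
(blow-up chart `π^λ`): at an exponent `(γ, k)` with `k ∈ ℕ` it equals
`Σ_{(α,β) ∈ Supp(F), α+β=γ} (λ^{β−k}·C(β,k)) • F.coeff (α,β)`, and it
vanishes at exponents `(γ, t)` with `t ∉ ℕ`. -/
noncomputable def blowupLamCoeff (lam : ℝ) {A : Type*} [CommRing A] [Algebra ℝ A]
    (F : HahnSeries (ℝ≥0 × ℝ≥0) A) (q : ℝ≥0 × ℝ≥0) : A :=
  if h : ∃ k : ℕ, q.2 = (k : ℝ≥0) then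
    ∑ᶠ p ∈ {p : ℝ≥0 × ℝ≥0 | p ∈ F.support ∧ p.1 + p.2 = q.1},
      (lam ^ ((p.2 : ℝ) - (h.choose : ℝ)) * genBinom (p.2 : ℝ) h.choose) • F.coeff p
  else 0


/-- The scalar `λ^(β-k) C(β,k)`. -/
noncomputable def blC (lam : ℝ) (β : ℝ≥0) (k : ℕ) : ℝ :=
  lam ^ ((β : ℝ) - (k : ℝ)) * genBinom (β : ℝ) k

lemma descPochhammer_smeval_aux (β : ℝ) (k : ℕ) :
    (descPochhammer ℤ k).smeval β = (descPochhammer ℝ k).eval β := by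
  rw [← descPochhammer_map (Int.castRingHom ℝ), Polynomial.eval_map, ← Polynomial.eval₂_smulOneHom_eq_smeval]
  congr 1
  exact Subsingleton.elim _ _

lemma genBinom_eq_choose (β : ℝ) (k : ℕ) : genBinom β k = Ring.choose β k := by
  rw [Ring.choose_eq_smul, genBinom, ← descPochhammer_eval_eq_prod_range,
    descPochhammer_smeval_aux, smul_eq_mul, div_eq_inv_mul]

lemma blC_add (lam : ℝ) (hlam : 0 < lam) (β β' : ℝ≥0) (k : ℕ) :
    blC lam (β + β') k = ∑ ij ∈ Finset.HasAntidiagonal.antidiagonal k, blC lam β ij.1 * blC lam β' ij.2 := by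
  unfold blC
  rw [NNReal.coe_add, genBinom_eq_choose, Ring.add_choose_eq k (Commute.all _ _), Finset.mul_sum]
  refine Finset.sum_congr rfl fun ij hij => ?_
  rw [Finset.HasAntidiagonal.mem_antidiagonal] at hij
  rw [genBinom_eq_choose, genBinom_eq_choose, ← hij, Nat.cast_add,
    show (β : ℝ) + β' - (ij.1 + ij.2) = (β - ij.1) + (β' - ij.2) by ring, Real.rpow_add hlam]
  ring

section blowup

variable {A : Type*} [CommRing A] [Algebra ℝ A]

lemma diag_finite (F : HahnSeries (ℝ≥0 × ℝ≥0) A) (γ : ℝ≥0) :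
    {p : ℝ≥0 × ℝ≥0 | p ∈ F.support ∧ p.1 + p.2 = γ}.Finite := by
  refine IsAntichain.finite_of_partiallyWellOrderedOn (r := (· ≤ ·)) ?_
    (F.isPWO_support.mono fun p hp => hp.1)
  rintro p ⟨-, hp⟩ q ⟨-, hq⟩ hne hle
  apply hne
  obtain ⟨h1, h2⟩ := Prod.mk_le_mk.1 (show (p.1, p.2) ≤ (q.1, q.2) from hle)
  have e : p.1 + p.2 = q.1 + q.2 := hp.trans hq.symm
  have e' : (p.1 : ℝ) + p.2 = q.1 + q.2 := by exact_mod_cast e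
  have h1' : (p.1 : ℝ) ≤ q.1 := by exact_mod_cast h1
  have h2' : (p.2 : ℝ) ≤ q.2 := by exact_mod_cast h2
  ext
  · linarith
  · linarith

/-- `D_γ` as a finset. -/
noncomputable def dg (F : HahnSeries (ℝ≥0 × ℝ≥0) A) (γ : ℝ≥0) : Finset (ℝ≥0 × ℝ≥0) :=
  (diag_finite F γ).toFinset

lemma mem_dg {F : HahnSeries (ℝ≥0 × ℝ≥0) A} {γ : ℝ≥0} {p : ℝ≥0 × ℝ≥0} :
    p ∈ dg F γ ↔ F.coeff p ≠ 0 ∧ p.1 + p.2 = γ := by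
  simp [dg]

lemma blowup_nat (lam : ℝ) (F : HahnSeries (ℝ≥0 × ℝ≥0) A) (γ : ℝ≥0) (k : ℕ)
    (s : Finset (ℝ≥0 × ℝ≥0)) (hs : ∀ p ∈ s, p.1 + p.2 = γ)
    (hs' : ∀ p, F.coeff p ≠ 0 → p.1 + p.2 = γ → p ∈ s) :
    blowupLamCoeff lam F (γ, (k : ℝ≥0)) = ∑ p ∈ s, blC lam p.2 k • F.coeff p := by
  have h : ∃ k' : ℕ, ((γ, (k : ℝ≥0)) : ℝ≥0 × ℝ≥0).2 = (k' : ℝ≥0) := ⟨k, rfl⟩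
  have hk : h.choose = k := by
    have := h.choose_spec
    exact (Nat.cast_injective (R := ℝ≥0) this).symm
  unfold blowupLamCoeff
  rw [dif_pos h]
  simp only [hk]
  have : {p : ℝ≥0 × ℝ≥0 | p ∈ F.support ∧ p.1 + p.2 = γ} = (dg F γ : Set (ℝ≥0 × ℝ≥0)) := by
    ext p; simp [mem_dg]
  rw [this, finsum_mem_coe_finset]
  apply Finset.sum_subset
  · intro p hp
    rw [mem_dg] at hp
    exact hs' p hp.1 hp.2
  · intro p hp hn
    have : F.coeff p = 0 := by
      by_contra hc
      exact hn (mem_dg.2 ⟨hc, hs p hp⟩)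
    simp [this]

lemma blowup_dg (lam : ℝ) (F : HahnSeries (ℝ≥0 × ℝ≥0) A) (γ : ℝ≥0) (k : ℕ) :
    blowupLamCoeff lam F (γ, (k : ℝ≥0)) = ∑ p ∈ dg F γ, blC lam p.2 k • F.coeff p :=
  blowup_nat lam F γ k _ (fun _ hp => (mem_dg.1 hp).2) (fun _ h1 h2 => mem_dg.2 ⟨h1, h2⟩)

lemma blowup_ne (lam : ℝ) (F : HahnSeries (ℝ≥0 × ℝ≥0) A) (q : ℝ≥0 × ℝ≥0)
    (h : ¬ ∃ k : ℕ, q.2 = (k : ℝ≥0)) : blowupLamCoeff lam F q = 0 := by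
  unfold blowupLamCoeff
  rw [dif_neg h]

/-- The set of total degrees of `F`. -/
def degs (F : HahnSeries (ℝ≥0 × ℝ≥0) A) : Set ℝ≥0 :=
  (fun p : ℝ≥0 × ℝ≥0 => p.1 + p.2) '' F.support

lemma degs_pwo (F : HahnSeries (ℝ≥0 × ℝ≥0) A) : (degs F).IsPWO :=
  F.isPWO_support.image_of_monotone fun _ _ h => add_le_add h.1 h.2

lemma blowup_mem (lam : ℝ) (F : HahnSeries (ℝ≥0 × ℝ≥0) A) (q : ℝ≥0 × ℝ≥0)
    (h : blowupLamCoeff lam F q ≠ 0) : q.1 ∈ degs F ∧ ∃ k : ℕ, q.2 = (k : ℝ≥0) := by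
  have h2 : ∃ k : ℕ, q.2 = (k : ℝ≥0) := by
    by_contra hc
    exact h (blowup_ne lam F q hc)
  refine ⟨?_, h2⟩
  obtain ⟨γ, t⟩ := q
  obtain ⟨k, hk⟩ := h2
  dsimp only at hk
  subst hk
  rw [blowup_dg] at h
  obtain ⟨p, hp, -⟩ := Finset.exists_ne_zero_of_sum_ne_zero h
  rw [mem_dg] at hp
  exact ⟨p, hp.1, hp.2⟩

lemma blowup_pwo (lam : ℝ) (F : HahnSeries (ℝ≥0 × ℝ≥0) A) :
    (Function.support (blowupLamCoeff lam F)).IsPWO := by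
  have hN : (Set.range (fun k : ℕ => (k : ℝ≥0))).IsPWO := by
    rw [← Set.image_univ]
    exact (Set.isPWO_of_wellQuasiOrderedLE _).image_of_monotone Nat.mono_cast
  refine ((degs_pwo F).prod hN).mono fun q hq => ?_
  obtain ⟨h1, k, h2⟩ := blowup_mem lam F q hq
  exact ⟨h1, k, h2.symm⟩

/-- The map `T_λ`. -/
noncomputable def blT (lam : ℝ) (F : HahnSeries (ℝ≥0 × ℝ≥0) A) : HahnSeries (ℝ≥0 × ℝ≥0) A where
  coeff := blowupLamCoeff lam F
  isPWO_support' := blowup_pwo lam F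

lemma blT_coeff (lam : ℝ) (F : HahnSeries (ℝ≥0 × ℝ≥0) A) (q : ℝ≥0 × ℝ≥0) :
    (blT lam F).coeff q = blowupLamCoeff lam F q := rfl

lemma coeff_mul_of (x y : HahnSeries (ℝ≥0 × ℝ≥0) A) (a : ℝ≥0 × ℝ≥0)
    (s : Finset ((ℝ≥0 × ℝ≥0) × (ℝ≥0 × ℝ≥0))) (hs : ∀ ij ∈ s, ij.1 + ij.2 = a)
    (hs' : ∀ ij : (ℝ≥0 × ℝ≥0) × (ℝ≥0 × ℝ≥0), x.coeff ij.1 ≠ 0 → y.coeff ij.2 ≠ 0 →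
      ij.1 + ij.2 = a → ij ∈ s) :
    (x * y).coeff a = ∑ ij ∈ s, x.coeff ij.1 * y.coeff ij.2 := by
  rw [HahnSeries.coeff_mul]
  apply Finset.sum_subset
  · intro ij hij
    rw [Finset.mem_antidiagonal] at hij
    exact hs' ij hij.1 hij.2.1 hij.2.2
  · intro ij hij hn
    by_contra hc
    apply hn
    rw [Finset.mem_antidiagonal]
    exact ⟨fun h => hc (by rw [h, zero_mul]), fun h => hc (by rw [h, mul_zero]), hs ij hij⟩

lemma hahn_ext_nat {x y : HahnSeries (ℝ≥0 × ℝ≥0) A}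
    (h : ∀ (γ : ℝ≥0) (k : ℕ), x.coeff (γ, (k : ℝ≥0)) = y.coeff (γ, (k : ℝ≥0)))
    (hx : ∀ q : ℝ≥0 × ℝ≥0, (¬ ∃ k : ℕ, q.2 = (k : ℝ≥0)) → x.coeff q = 0)
    (hy : ∀ q : ℝ≥0 × ℝ≥0, (¬ ∃ k : ℕ, q.2 = (k : ℝ≥0)) → y.coeff q = 0) : x = y := by
  ext q
  by_cases hq : ∃ k : ℕ, q.2 = (k : ℝ≥0)
  · obtain ⟨γ, t⟩ := q
    obtain ⟨k, hk⟩ := hq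
    dsimp only at hk
    subst hk
    exact h γ k
  · rw [hx q hq, hy q hq]

lemma blT_zero (lam : ℝ) : blT lam (0 : HahnSeries (ℝ≥0 × ℝ≥0) A) = 0 := by
  refine hahn_ext_nat (fun γ k => ?_) (fun q hq => blowup_ne lam _ q hq) (fun q _ => by simp)
  rw [blT_coeff, blowup_dg]
  simp

lemma blT_add (lam : ℝ) (F G : HahnSeries (ℝ≥0 × ℝ≥0) A) :
    blT lam (F + G) = blT lam F + blT lam G := by
  refine hahn_ext_nat (fun γ k => ?_) (fun q hq => blowup_ne lam _ q hq) (fun q hq => ?_)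
  · have hs : ∀ p ∈ dg F γ ∪ dg G γ, p.1 + p.2 = γ := by
      intro p hp
      rw [Finset.mem_union, mem_dg, mem_dg] at hp
      tauto
    rw [HahnSeries.coeff_add, blT_coeff, blT_coeff, blT_coeff,
      blowup_nat lam F γ k (dg F γ ∪ dg G γ) hs, blowup_nat lam G γ k (dg F γ ∪ dg G γ) hs,
      blowup_nat lam (F + G) γ k (dg F γ ∪ dg G γ) hs, ← Finset.sum_add_distrib]
    · exact Finset.sum_congr rfl fun p _ => by rw [HahnSeries.coeff_add, smul_add]
    all_goals
      intro p h1 h2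
      rw [Finset.mem_union, mem_dg, mem_dg]
    · by_contra hc
      apply h1
      rw [HahnSeries.coeff_add]
      have h3 : F.coeff p = 0 := by tauto
      have h4 : G.coeff p = 0 := by tauto
      rw [h3, h4, add_zero]
    · exact Or.inr ⟨h1, h2⟩
    · exact Or.inl ⟨h1, h2⟩
  · rw [HahnSeries.coeff_add, blT_coeff, blT_coeff, blowup_ne lam _ q hq, blowup_ne lam _ q hq,
      add_zero]

lemma blC_zero (lam : ℝ) (k : ℕ) : blC lam 0 k = if k = 0 then 1 else 0 := by
  unfold blC genBinom
  split_ifs with h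
  · subst h; simp
  · rw [Finset.prod_eq_zero (i := 0)]
    · simp
    · simpa using Nat.pos_of_ne_zero h
    · simp

lemma blT_one (lam : ℝ) : blT lam (1 : HahnSeries (ℝ≥0 × ℝ≥0) A) = 1 := by
  refine hahn_ext_nat (fun γ k => ?_) (fun q hq => blowup_ne lam _ q hq) (fun q hq => ?_)
  · rw [blT_coeff]
    by_cases hγ : γ = 0
    · subst hγ
      rw [blowup_nat lam 1 0 k {0} (by simp)]
      · simp only [Finset.sum_singleton, Prod.snd_zero, blC_zero]
        by_cases hk : k = 0
        · subst hk; simp [← Prod.zero_eq_mk]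
        · simp [hk, HahnSeries.coeff_one, Prod.ext_iff]
      · intro p _ h2
        have : p.1 = 0 ∧ p.2 = 0 := by simpa using h2
        simpa [Prod.ext_iff] using this
    · rw [blowup_nat lam 1 γ k ∅ (by simp)]
      · simp [HahnSeries.coeff_one, Prod.ext_iff, hγ]
      · intro p h1 h2
        exfalso
        apply h1
        rw [HahnSeries.coeff_one, if_neg]
        rintro rfl
        exact hγ (by simpa using h2.symm)
  · rw [HahnSeries.coeff_one, if_neg]
    rintro rfl
    exact hq ⟨0, by simp⟩

lemma blT_mul (lam : ℝ) (hlam : 0 < lam) (F G : HahnSeries (ℝ≥0 × ℝ≥0) A) :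
    blT lam (F * G) = blT lam F * blT lam G := by
  refine hahn_ext_nat (fun γ k => ?_) (fun q hq => blowup_ne lam _ q hq) (fun q hq => ?_)
  · let W : Finset (ℝ≥0 × ℝ≥0) := Finset.antidiagonal (degs_pwo F) (degs_pwo G) γ
    have hW : ∀ w, w ∈ W ↔ w.1 ∈ degs F ∧ w.2 ∈ degs G ∧ w.1 + w.2 = γ := fun w =>
      Finset.mem_antidiagonal
    let N : Finset ((ℝ≥0 × ℝ≥0) × (ℝ≥0 × ℝ≥0)) := W.biUnion fun w => dg F w.1 ×ˢ dg G w.2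
    have hN : ∀ x, x ∈ N ↔ F.coeff x.1 ≠ 0 ∧ G.coeff x.2 ≠ 0 ∧
        (x.1.1 + x.1.2) + (x.2.1 + x.2.2) = γ := by
      intro x
      simp only [N, Finset.mem_biUnion, Finset.mem_product, mem_dg, hW]
      constructor
      · rintro ⟨w, ⟨-, -, hw⟩, ⟨h1, h2⟩, h3, h4⟩
        exact ⟨h1, h3, by rw [h2, h4, hw]⟩
      · rintro ⟨h1, h2, h3⟩
        exact ⟨(x.1.1 + x.1.2, x.2.1 + x.2.2), ⟨⟨x.1, h1, rfl⟩, ⟨x.2, h2, rfl⟩, h3⟩,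
          ⟨h1, rfl⟩, h2, rfl⟩
    have hdisj : (W : Set (ℝ≥0 × ℝ≥0)).PairwiseDisjoint fun w => dg F w.1 ×ˢ dg G w.2 := by
      intro w _ w' _ hne
      rw [Function.onFun, Finset.disjoint_left]
      intro x hx hx'
      rw [Finset.mem_product, mem_dg, mem_dg] at hx hx'
      exact hne (Prod.ext (hx.1.2.symm.trans hx'.1.2) (hx.2.2.symm.trans hx'.2.2))
    have key : ∑ x ∈ N, blC lam (x.1.2 + x.2.2) k • (F.coeff x.1 * G.coeff x.2) =
        (blT lam F * blT lam G).coeff (γ, (k : ℝ≥0)) := by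
      rw [coeff_mul_of _ _ _ ((W ×ˢ Finset.HasAntidiagonal.antidiagonal k).image
        fun z => ((z.1.1, (z.2.1 : ℝ≥0)), (z.1.2, (z.2.2 : ℝ≥0))))]
      · rw [Finset.sum_image, Finset.sum_product, Finset.sum_biUnion hdisj]
        · refine Finset.sum_congr rfl fun w _ => ?_
          simp only [blT_coeff, blowup_dg, Finset.sum_mul_sum, Finset.sum_product]
          symm
          rw [Finset.sum_comm]
          refine Finset.sum_congr rfl fun p _ => ?_
          rw [Finset.sum_comm]
          refine Finset.sum_congr rfl fun q _ => ?_
          symm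
          rw [blC_add lam hlam, Finset.sum_smul]
          refine Finset.sum_congr rfl fun ij _ => ?_
          rw [smul_mul_smul_comm]
        · intro z _ z' _ h
          simpa [Prod.ext_iff, and_assoc, and_left_comm] using h
      · intro x hx
        rw [Finset.mem_image] at hx
        obtain ⟨z, hz, rfl⟩ := hx
        rw [Finset.mem_product, hW, Finset.HasAntidiagonal.mem_antidiagonal] at hz
        obtain ⟨⟨-, -, h1⟩, h2⟩ := hz
        simp only [Prod.mk_add_mk, h1, ← Nat.cast_add, h2]
      · rintro ⟨⟨a, b⟩, ⟨c, d⟩⟩ h1 h2 h3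
        obtain ⟨h4, i, h5⟩ := blowup_mem lam F _ h1
        obtain ⟨h6, j, h7⟩ := blowup_mem lam G _ h2
        dsimp only at h4 h5 h6 h7
        subst h5 h7
        simp only [Prod.mk_add_mk, Prod.mk.injEq, ← Nat.cast_add, Nat.cast_inj] at h3
        rw [Finset.mem_image]
        refine ⟨((a, c), (i, j)), ?_, rfl⟩
        rw [Finset.mem_product, hW, Finset.HasAntidiagonal.mem_antidiagonal]
        exact ⟨⟨h4, h6, h3.1⟩, h3.2⟩
    rw [← key, blT_coeff, blowup_nat lam (F * G) γ k (N.image fun x => x.1 + x.2),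
      ← Finset.sum_fiberwise_of_maps_to (s := N) (t := N.image fun x => x.1 + x.2)
        (g := fun x => x.1 + x.2) (fun x hx => Finset.mem_image_of_mem _ hx)]
    · refine Finset.sum_congr rfl fun r hr => ?_
      have hrγ : r.1 + r.2 = γ := by
        rw [Finset.mem_image] at hr
        obtain ⟨x, hx, rfl⟩ := hr
        rw [← ((hN x).1 hx).2.2, Prod.fst_add, Prod.snd_add]
        ring
      rw [coeff_mul_of F G r (N.filter fun x => x.1 + x.2 = r), Finset.smul_sum]
      · refine Finset.sum_congr rfl fun x hx => ?_
        rw [← (Finset.mem_filter.1 hx).2, Prod.snd_add]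
      · exact fun x hx => (Finset.mem_filter.1 hx).2
      · intro x h1 h2 h3
        refine Finset.mem_filter.2 ⟨(hN x).2 ⟨h1, h2, ?_⟩, h3⟩
        rw [← hrγ, ← h3, Prod.fst_add, Prod.snd_add]
        ring
    · intro r hr
      rw [Finset.mem_image] at hr
      obtain ⟨x, hx, rfl⟩ := hr
      rw [← ((hN x).1 hx).2.2, Prod.fst_add, Prod.snd_add]
      ring
    · intro r h1 h2
      rw [HahnSeries.coeff_mul] at h1
      obtain ⟨x, hx, -⟩ := Finset.exists_ne_zero_of_sum_ne_zero h1
      rw [Finset.mem_antidiagonal] at hx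
      refine Finset.mem_image.2 ⟨x, (hN x).2 ⟨hx.1, hx.2.1, ?_⟩, hx.2.2⟩
      rw [← h2, ← hx.2.2, Prod.fst_add, Prod.snd_add]
      ring
  · by_contra hc
    rw [← ne_eq, HahnSeries.coeff_mul] at hc
    obtain ⟨x, hx, -⟩ := Finset.exists_ne_zero_of_sum_ne_zero hc
    rw [Finset.mem_antidiagonal] at hx
    obtain ⟨h1, h2, rfl⟩ := hx
    obtain ⟨-, i, hi⟩ := blowup_mem lam F _ h1
    obtain ⟨-, j, hj⟩ := blowup_mem lam G _ h2
    exact hq ⟨i + j, by rw [Prod.snd_add, hi, hj, Nat.cast_add]⟩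

lemma blT_eq_zero (lam : ℝ) (hlam : 0 < lam) (F : HahnSeries (ℝ≥0 × ℝ≥0) A)
    (h : blT lam F = 0) : F = 0 := by
  ext p₀
  rw [HahnSeries.coeff_zero]
  by_contra hp₀
  obtain ⟨γ, hγ⟩ : ∃ γ, γ = p₀.1 + p₀.2 := ⟨_, rfl⟩
  have hmem : p₀ ∈ dg F γ := mem_dg.2 ⟨hp₀, hγ.symm⟩
  have h0 : ∀ k : ℕ, ∑ p ∈ dg F γ,
      (∏ i ∈ Finset.range k, ((p.2 : ℝ) - i)) • (lam ^ (p.2 : ℝ) • F.coeff p) = 0 := by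
    intro k
    have h1 : (blT lam F).coeff (γ, (k : ℝ≥0)) = 0 := by rw [h, HahnSeries.coeff_zero]
    rw [blT_coeff, blowup_dg] at h1
    have h2 := congrArg (fun a : A => (lam ^ (k : ℝ) * (k.factorial : ℝ)) • a) h1
    simp only [smul_zero, Finset.smul_sum] at h2
    rw [← h2]
    refine Finset.sum_congr rfl fun p _ => ?_
    rw [smul_smul, smul_smul]
    congr 1
    unfold blC genBinom
    rw [Real.rpow_sub hlam]
    have : lam ^ (k : ℝ) ≠ 0 := (Real.rpow_pos_of_pos hlam _).ne'
    have : (k.factorial : ℝ) ≠ 0 := by exact_mod_cast k.factorial_ne_zero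
    field_simp
  have h1 : ∀ (s : Finset ℝ) (k : ℕ), ∑ p ∈ dg F γ,
      ((∏ b ∈ s, ((p.2 : ℝ) - b)) * ∏ i ∈ Finset.range k, ((p.2 : ℝ) - i)) •
        (lam ^ (p.2 : ℝ) • F.coeff p) = 0 := by
    intro s
    induction s using Finset.induction_on with
    | empty => intro k; simpa using h0 k
    | insert b s hb ih =>
      intro k
      have e1 := ih (k + 1)
      have e2 := congrArg (fun a : A => ((k : ℝ) - b) • a) (ih k)
      simp only [smul_zero, Finset.smul_sum] at e2
      rw [← add_zero (0 : A)]
      nth_rewrite 1 [← e1]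
      rw [← e2, ← Finset.sum_add_distrib]
      refine Finset.sum_congr rfl fun p _ => ?_
      rw [smul_smul ((k : ℝ) - b), ← add_smul, Finset.prod_insert hb, Finset.prod_range_succ]
      congr 1
      ring
  have h2 := h1 (((dg F γ).erase p₀).image fun p => (p.2 : ℝ)) 0
  simp only [Finset.range_zero, Finset.prod_empty, mul_one] at h2
  rw [Finset.sum_eq_single p₀] at h2
  · rw [smul_smul] at h2
    have hne : (∏ b ∈ ((dg F γ).erase p₀).image (fun p => (p.2 : ℝ)), ((p₀.2 : ℝ) - b)) *
        lam ^ (p₀.2 : ℝ) ≠ 0 := by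
      refine mul_ne_zero ?_ (Real.rpow_pos_of_pos hlam _).ne'
      rw [Finset.prod_ne_zero_iff]
      intro b hb hc
      rw [Finset.mem_image] at hb
      obtain ⟨p, hp, rfl⟩ := hb
      rw [Finset.mem_erase, mem_dg] at hp
      apply hp.1
      have e : p₀.2 = p.2 := by
        apply NNReal.coe_injective
        linarith
      have e' : p.1 + p.2 = p₀.1 + p.2 := by rw [hp.2.2, hγ, e]
      exact Prod.ext (add_right_cancel e') e.symm
    apply hp₀
    have h3 := congrArg (fun a : A => (((∏ b ∈ ((dg F γ).erase p₀).image (fun p => (p.2 : ℝ)),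
      ((p₀.2 : ℝ) - b)) * lam ^ (p₀.2 : ℝ))⁻¹) • a) h2
    simp only [smul_zero] at h3
    rwa [inv_smul_smul₀ hne] at h3
  · intro p hp hne
    rw [Finset.prod_eq_zero (i := (p.2 : ℝ)), zero_smul]
    · exact Finset.mem_image_of_mem _ (Finset.mem_erase.2 ⟨hne, hp⟩)
    · exact sub_self _
  · exact fun hn => absurd hmem hn

end blowup

/-- Fix `λ > 0` and a commutative `ℝ`-algebra `A`, and let `R` be
the ring of generalised power series in two variables `u, v` over `A`.  Then:
(i) for every `F ∈ R` and `γ`, the set `{(α,β) ∈ Supp(F) : α + β = γ}` is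
finite; (ii) the coefficient function `blowupLamCoeff lam F` has partially
well-ordered support, hence defines an element `T_λ(F) ∈ R`; (iii) the
resulting map `T_λ : R → R` (representing `F(u,v) ↦ F(u, u·(λ+v))`) is an
injective ring homomorphism. -/
theorem blowup_lam_injective_ringHom (lam : ℝ) (hlam : 0 < lam)
    (A : Type*) [CommRing A] [Algebra ℝ A] :
    (∀ (F : HahnSeries (ℝ≥0 × ℝ≥0) A) (γ : ℝ≥0),
        {p : ℝ≥0 × ℝ≥0 | p ∈ F.support ∧ p.1 + p.2 = γ}.Finite) ∧
    (∀ F : HahnSeries (ℝ≥0 × ℝ≥0) A,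
        (Function.support (blowupLamCoeff lam F)).IsPWO) ∧
    ∃ T : HahnSeries (ℝ≥0 × ℝ≥0) A →+* HahnSeries (ℝ≥0 × ℝ≥0) A,
      Function.Injective T ∧
      ∀ (F : HahnSeries (ℝ≥0 × ℝ≥0) A) (q : ℝ≥0 × ℝ≥0),
        (T F).coeff q = blowupLamCoeff lam F q := by
  refine ⟨diag_finite, blowup_pwo lam, ?_⟩
  let T : HahnSeries (ℝ≥0 × ℝ≥0) A →+* HahnSeries (ℝ≥0 × ℝ≥0) A :=
    { toFun := blT lam
      map_one' := blT_one lam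
      map_mul' := blT_mul lam hlam
      map_zero' := blT_zero lam
      map_add' := blT_add lam }
  exact ⟨T, (injective_iff_map_eq_zero T).2 fun F hF => blT_eq_zero lam hlam F hF,
    fun F q => rfl⟩
end
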